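/- Assume μ > 0, φ* = 1 and θ < 1. Then for every x ∈ ℕ₀: lim_{q↓0} Φ_q(x)/q = ∫_0^1 exp{−∫_θ^v μ(1 − r̃(w))/(λ(p̃(w) − w)) dw} v^x / (λ(p̃(v) − v)) dv, both sides taking values in (0,∞]. -/

import Mathlib

open MeasureTheory Filter Set

/-- The probability generating function of the offspring distribution `p`. -/
noncomputable def ptilde (p : ℕ → ℝ) (z : ℝ) : ℝ := ∑' k, p k * z ^ k

/-- The p.g.f. of the immigration/culling mechanism: `rneg` is `r_{-1}`,
`r k` for `k ≥ 1` are the immigration probabilities (we require `r 0 = 0`). -/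
noncomputable def rtilde (rneg : ℝ) (r : ℕ → ℝ) (z : ℝ) : ℝ :=
  rneg / z + ∑' k, r k * z ^ k

/-- `f : ℕ → ℝ` is `q`-harmonic for the branching process with branching mechanism `p`
(rate `lam`) and immigration/culling mechanism `(rneg, r)` (rate `mu`). -/
def IsQHarmonic (lam mu q : ℝ) (p : ℕ → ℝ) (rneg : ℝ) (r : ℕ → ℝ) (f : ℕ → ℝ) : Prop :=
  ∀ x : ℕ, 1 ≤ x →
    (q + lam * x + mu) * f x
      = lam * x * (∑' k, p k * f (x + k - 1))
        + mu * (rneg * f (x - 1) + ∑' k, r k * f (x + k))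

/-- The harmonic function `Φ_q`; `φ` is the smallest fixed point of `ptilde p` in `(0,1]`
and `θ` is the delimiter `θ_q`. -/
noncomputable def Phi (lam mu : ℝ) (p : ℕ → ℝ) (rneg : ℝ) (r : ℕ → ℝ)
    (φ θ q : ℝ) (x : ℕ) : ℝ :=
  q * ∫ v in (0:ℝ)..φ,
      Real.exp (-∫ w in θ..v,
          (q + mu * (1 - rtilde rneg r w)) / (lam * |ptilde p w - w|))
        / (lam * |ptilde p v - v|) * v ^ x

/-- The harmonic function `Ψ_q`. -/
noncomputable def Psi (lam mu : ℝ) (p : ℕ → ℝ) (rneg : ℝ) (r : ℕ → ℝ)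
    (φ q : ℝ) (x : ℕ) : ℝ :=
  1 - q * ∫ v in φ..(1:ℝ),
      Real.exp (-∫ w in v..(1:ℝ),
          (q + mu * (1 - rtilde rneg r w)) / (lam * |ptilde p w - w|))
        / (lam * |ptilde p v - v|) * v ^ x

/-- Condition (E'): `∫_v^1 dz/(z - ptilde p z) < ∞` for some `v ∈ (φ, 1)`. -/
def CondE (p : ℕ → ℝ) (φ : ℝ) : Prop :=
  ∃ v, φ < v ∧ v < 1 ∧
    IntervalIntegrable (fun z => 1 / (z - ptilde p z)) MeasureTheory.volume v 1

/-!
For the speed `ρ = λ(p̃ - id)` and the rate `g = μ(1 - r̃)`, write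
`K_q(v) = ∫_{θ_q}^v (q + g)/ρ`, `K(v) = ∫_θ^v g/ρ` and `T(v) = ∫_0^v 1/ρ`. Since `r̃` is convex with
`r̃(1) = 1`, the function `q + g` changes sign from negative to positive at `θ_q`, and `g` does so
at `θ`, so `K_q` and `K` are nonnegative. Splitting the integrals at `θ` and `θ_q` gives
`q (T(v) - T(θ)) + K(v) ≤ K_q(v) ≤ q T(v) + K(v)`.
Hence `Φ_q(x)/q = ∫ exp(-K_q) v^x/ρ dv` lies between `∫ exp(-q T) exp(-K) v^x/ρ dv` and
`exp(q T(θ)) ∫ exp(-K) v^x/ρ dv`, both of which tend to `∫ exp(-K) v^x/ρ dv`, finite or not. The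
integral defining `Φ_q` converges because `exp(-q T)/ρ` is the derivative of the bounded monotone
function `-exp(-q T)/q`.
-/

open scoped ENNReal Topology

section Analysis

variable {α : Type*} [MeasurableSpace α] {m : Measure α}

lemma tendsto_ofReal_exp_mul_mul (c : ℝ) (y : ℝ≥0∞) :
    Tendsto (fun q : ℝ => ENNReal.ofReal (Real.exp (q * c)) * y) (𝓝[>] 0) (𝓝 y) := by
  have hexp : Tendsto (fun q : ℝ => Real.exp (q * c)) (𝓝[>] 0) (𝓝 1) :=
    tendsto_nhdsWithin_of_tendsto_nhds <| Continuous.tendsto' (by fun_prop) _ _ (by simp)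
  have hofReal := ENNReal.tendsto_ofReal hexp
  rw [ENNReal.ofReal_one] at hofReal
  simpa only [one_mul] using ENNReal.Tendsto.mul_const hofReal (Or.inl one_ne_zero)

lemma tendsto_lintegral_exp_neg_mul {T : α → ℝ} {f : α → ℝ≥0∞} (hT : AEMeasurable T m)
    (hT0 : 0 ≤ᵐ[m] T) (hf : AEMeasurable f m) :
    Tendsto (fun q : ℝ => ∫⁻ v, ENNReal.ofReal (Real.exp (-(q * T v))) * f v ∂m) (𝓝[>] 0)
      (𝓝 (∫⁻ v, f v ∂m)) := by
  have pointwise (v : α) : Tendsto (fun q : ℝ => ENNReal.ofReal (Real.exp (-(q * T v))) * f v)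
      (𝓝[>] 0) (𝓝 (f v)) := by
    simpa only [mul_neg] using tendsto_ofReal_exp_mul_mul (-T v) (f v)
  refine tendsto_of_le_liminf_of_limsup_le ?_ ?_
  · calc ∫⁻ v, f v ∂m
        = ∫⁻ v, liminf (fun q : ℝ => ENNReal.ofReal (Real.exp (-(q * T v))) * f v) (𝓝[>] 0) ∂m :=
          lintegral_congr fun v => (pointwise v).liminf_eq.symm
      _ ≤ _ := lintegral_liminf_le' fun q =>
          (Real.measurable_exp.comp_aemeasurable (hT.const_mul q).neg).ennreal_ofReal.mul hf
  · refine limsup_le_of_le (h := ?_)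
    filter_upwards [self_mem_nhdsWithin] with q hq
    refine lintegral_mono_ae ?_
    filter_upwards [hT0] with v hv
    refine mul_le_of_le_one_left' (ENNReal.ofReal_le_one.2 (Real.exp_le_one_iff.2 ?_))
    exact neg_nonpos.2 (mul_nonneg (le_of_lt hq) hv)

lemma setLIntegral_ofReal_pos {F : α → ℝ} {s : Set α} (hs : MeasurableSet s) (hs0 : m s ≠ 0)
    (hF : AEMeasurable F (m.restrict s)) (hpos : ∀ v ∈ s, 0 < F v) :
    0 < ∫⁻ v in s, ENNReal.ofReal (F v) ∂m := by
  refine pos_iff_ne_zero.2 fun hzero => hs0 ?_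
  rw [lintegral_eq_zero_iff' hF.ennreal_ofReal, EventuallyEq, ae_restrict_iff' hs] at hzero
  refine measure_mono_null (fun v hv => ?_) hzero
  simp [hv, hpos v hv]

lemma integrableOn_Ioo_of_monotoneOn_of_hasDerivAt {f f' : ℝ → ℝ} {a b : ℝ}
    (hf : MonotoneOn f (Ioo a b)) (hbelow : BddBelow (f '' Ioo a b))
    (habove : BddAbove (f '' Ioo a b)) (hderiv : ∀ v ∈ Ioo a b, HasDerivAt f (f' v) v) :
    IntegrableOn f' (Ioo a b) := by
  obtain ⟨F, hF, hfF⟩ := hf.exists_monotone_extension hbelow habove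
  have hF' : IntegrableOn (deriv F) (Ioo a b) :=
    (hF.monotoneOn (uIcc a b)).intervalIntegrable_deriv.1.mono_set Ioo_subset_Ioc_self
  refine hF'.congr_fun (fun v hv => ?_) measurableSet_Ioo
  have hFf : F =ᶠ[𝓝 v] f := hfF.symm.eventuallyEq_of_mem (isOpen_Ioo.mem_nhds hv)
  rw [hFf.deriv_eq, (hderiv v hv).deriv]

lemma hasDerivAt_integral_of_continuousOn {f : ℝ → ℝ} {S : Set ℝ} {c v : ℝ}
    (hS : S.OrdConnected) (hf : ContinuousOn f S) (hc : c ∈ S) (hv : S ∈ 𝓝 v) :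
    HasDerivAt (fun u => ∫ w in c..u, f w) (f v) v :=
  intervalIntegral.integral_hasDerivAt_right
    (hf.mono (hS.uIcc_subset hc (mem_of_mem_nhds hv))).intervalIntegrable
    ((hf.mono interior_subset).stronglyMeasurableAtFilter isOpen_interior v
      (mem_interior_iff_mem_nhds.2 hv))
    (hf.continuousAt hv)

lemma ordConnected_of_Ioo_subset_of_subset_Ico {a b : ℝ} {S : Set ℝ} (hIoo : Ioo a b ⊆ S)
    (hIco : S ⊆ Ico a b) : S.OrdConnected := by
  refine ⟨fun u hu v hv w hw => ?_⟩
  rcases hw.1.eq_or_lt with rfl | huw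
  · exact hu
  · exact hIoo ⟨(hIco hu).1.trans_lt huw, hw.2.trans_lt (hIco hv).2⟩

lemma convexOn_tsum {ι E : Type*} [AddCommGroup E] [Module ℝ E] {s : Set E} {f : ι → E → ℝ}
    (hs : Convex ℝ s) (hf : ∀ i, ConvexOn ℝ s (f i))
    (hsum : ∀ z ∈ s, Summable fun i => f i z) : ConvexOn ℝ s fun z => ∑' i, f i z := by
  refine ⟨hs, fun y hy z hz c d hc hd hcd => ?_⟩
  have hcomb := ((hsum y hy).hasSum.const_smul c).add ((hsum z hz).hasSum.const_smul d)
  exact hasSum_le (fun i => (hf i).2 hy hz hc hd hcd) (hsum _ (hs hy hz hc hd hcd)).hasSum hcomb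

end Analysis

section Flow

/-- The exponent `∫_c^v g/ρ` by which a particle moving with speed `ρ` from `c` to `v` is
discounted at rate `g`. The paper's `∫_{θ_q}^v γ_q` is the case `g = q + μ(1 - r̃)`. -/
noncomputable def discountExponent (ρ g : ℝ → ℝ) (c v : ℝ) : ℝ := ∫ w in c..v, g w / ρ w

/-- The time a particle with speed `ρ` needs to move from `a` to `v`. -/
noncomputable def transitTime (ρ : ℝ → ℝ) (a v : ℝ) : ℝ := ∫ w in a..v, 1 / ρ w

/-- On `S`, the function `f` is nonpositive to the left of `c ∈ S` and nonnegative to its right.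
Nothing is asked of `f c`: without culling, `f = q + μ(1 - r̃)` is positive at `c = θ_q = 0`. -/
structure SignChangesAt (f : ℝ → ℝ) (S : Set ℝ) (c : ℝ) : Prop where
  mem : c ∈ S
  nonpos : ∀ w ∈ S, w < c → f w ≤ 0
  nonneg : ∀ w ∈ S, c < w → 0 ≤ f w

/-- A positive speed `ρ` on `[a, b)` together with a rate `g` on `S`, where `S` is `(a, b)` or
`[a, b)`: the rate is allowed to be singular at `a`, as `1 - r̃` is at `0` under culling. -/
structure DiscountedFlow (a b : ℝ) (S : Set ℝ) (ρ g : ℝ → ℝ) : Prop where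
  Ioo_subset : Ioo a b ⊆ S
  subset_Ico : S ⊆ Ico a b
  speed_continuousOn : ContinuousOn ρ (Ico a b)
  speed_pos : ∀ v ∈ Ico a b, 0 < ρ v
  rate_continuousOn : ContinuousOn g S

variable {a b c q u v θ η : ℝ} {S : Set ℝ} {ρ g k : ℝ → ℝ}

lemma SignChangesAt.discountExponent_nonneg (hg : SignChangesAt g S c) (hS : S.OrdConnected)
    (hρ : ∀ w ∈ S, 0 ≤ ρ w) (hv : v ∈ S) : 0 ≤ discountExponent ρ g c v := by
  rcases le_total c v with hcv | hvc
  · rw [discountExponent, intervalIntegral.integral_of_le hcv, integral_Ioc_eq_integral_Ioo]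
    refine setIntegral_nonneg measurableSet_Ioo fun w hw => ?_
    have hwS := hS.out hg.mem hv (Ioo_subset_Icc_self hw)
    exact div_nonneg (hg.nonneg w hwS hw.1) (hρ w hwS)
  · rw [discountExponent, intervalIntegral.integral_of_ge hvc, integral_Ioc_eq_integral_Ioo]
    refine neg_nonneg.2 (setIntegral_nonpos measurableSet_Ioo fun w hw => ?_)
    have hwS := hS.out hv hg.mem (Ioo_subset_Icc_self hw)
    exact div_nonpos_of_nonpos_of_nonneg (hg.nonpos w hwS hw.2) (hρ w hwS)

namespace DiscountedFlow

lemma ordConnected (h : DiscountedFlow a b S ρ g) : S.OrdConnected :=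
  ordConnected_of_Ioo_subset_of_subset_Ico h.Ioo_subset h.subset_Ico

lemma const_add (h : DiscountedFlow a b S ρ g) (q : ℝ) :
    DiscountedFlow a b S ρ fun w => q + g w :=
  { h with rate_continuousOn := continuousOn_const.add h.rate_continuousOn }

lemma one_div_speed_continuousOn (h : DiscountedFlow a b S ρ g) :
    ContinuousOn (fun w => 1 / ρ w) (Ico a b) :=
  continuousOn_const.div h.speed_continuousOn fun w hw => (h.speed_pos w hw).ne'

lemma rate_div_speed_continuousOn (h : DiscountedFlow a b S ρ g) :
    ContinuousOn (fun w => g w / ρ w) S :=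
  h.rate_continuousOn.div (h.speed_continuousOn.mono h.subset_Ico)
    fun w hw => (h.speed_pos w (h.subset_Ico hw)).ne'

lemma intervalIntegrable_one_div_speed (h : DiscountedFlow a b S ρ g) (hu : u ∈ Ico a b)
    (hv : v ∈ Ico a b) : IntervalIntegrable (fun w => 1 / ρ w) volume u v :=
  (h.one_div_speed_continuousOn.mono (ordConnected_Ico.uIcc_subset hu hv)).intervalIntegrable

lemma intervalIntegrable_rate_div_speed (h : DiscountedFlow a b S ρ g) (hu : u ∈ S)
    (hv : v ∈ S) : IntervalIntegrable (fun w => g w / ρ w) volume u v :=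
  (h.rate_div_speed_continuousOn.mono (h.ordConnected.uIcc_subset hu hv)).intervalIntegrable

lemma discountExponent_nonneg (h : DiscountedFlow a b S ρ g) (hc : SignChangesAt g S c)
    (hv : v ∈ S) : 0 ≤ discountExponent ρ g c v :=
  hc.discountExponent_nonneg h.ordConnected (fun w hw => (h.speed_pos w (h.subset_Ico hw)).le) hv

lemma discountExponent_continuousOn (h : DiscountedFlow a b S ρ g) (hc : c ∈ S) :
    ContinuousOn (discountExponent ρ g c) (Ioo a b) := fun _ hv =>
  (hasDerivAt_integral_of_continuousOn h.ordConnected h.rate_div_speed_continuousOn hc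
    (mem_of_superset (isOpen_Ioo.mem_nhds hv) h.Ioo_subset)).continuousAt.continuousWithinAt

lemma discountExponent_add_adjacent (h : DiscountedFlow a b S ρ g) (hc : c ∈ S) (hu : u ∈ S)
    (hv : v ∈ S) :
    discountExponent ρ g c u + discountExponent ρ g u v = discountExponent ρ g c v :=
  intervalIntegral.integral_add_adjacent_intervals (h.intervalIntegrable_rate_div_speed hc hu)
    (h.intervalIntegrable_rate_div_speed hu hv)

lemma transitTime_nonneg (h : DiscountedFlow a b S ρ g) (hv : v ∈ Ico a b) :
    0 ≤ transitTime ρ a v :=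
  intervalIntegral.integral_nonneg hv.1 fun w hw =>
    (one_div_pos.2 (h.speed_pos w ⟨hw.1, hw.2.trans_lt hv.2⟩)).le

lemma hasDerivAt_transitTime (h : DiscountedFlow a b S ρ g) (hv : v ∈ Ioo a b) :
    HasDerivAt (transitTime ρ a) (1 / ρ v) v :=
  hasDerivAt_integral_of_continuousOn ordConnected_Ico h.one_div_speed_continuousOn
    (left_mem_Ico.2 (hv.1.trans hv.2)) (Ico_mem_nhds hv.1 hv.2)

lemma transitTime_continuousOn (h : DiscountedFlow a b S ρ g) :
    ContinuousOn (transitTime ρ a) (Ioo a b) :=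
  fun _ hv => (h.hasDerivAt_transitTime hv).continuousAt.continuousWithinAt

lemma transitTime_monotoneOn (h : DiscountedFlow a b S ρ g) :
    MonotoneOn (transitTime ρ a) (Ioo a b) := by
  refine monotoneOn_of_hasDerivWithinAt_nonneg (f' := fun v => 1 / ρ v) (convex_Ioo a b)
    h.transitTime_continuousOn (fun v hv => ?_) (fun v hv => ?_) <;> rw [interior_Ioo] at hv
  · exact (h.hasDerivAt_transitTime hv).hasDerivWithinAt
  · exact (one_div_pos.2 (h.speed_pos v (Ioo_subset_Ico_self hv))).le

lemma discountExponent_const_add (h : DiscountedFlow a b S ρ g) (hu : u ∈ S) (hv : v ∈ S) :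
    discountExponent ρ (fun w => q + g w) u v
      = q * (transitTime ρ a v - transitTime ρ a u) + discountExponent ρ g u v := by
  have hu' := h.subset_Ico hu
  have hv' := h.subset_Ico hv
  have ha : a ∈ Ico a b := left_mem_Ico.2 (hu'.1.trans_lt hu'.2)
  rw [transitTime, transitTime, intervalIntegral.integral_interval_sub_left
      (h.intervalIntegrable_one_div_speed ha hv') (h.intervalIntegrable_one_div_speed ha hu'),
    ← intervalIntegral.integral_const_mul, discountExponent, discountExponent,
    ← intervalIntegral.integral_add ((h.intervalIntegrable_one_div_speed hu' hv').const_mul q)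
      (h.intervalIntegrable_rate_div_speed hu hv)]
  exact intervalIntegral.integral_congr fun w _ => by ring

lemma discountExponent_const_add_le (h : DiscountedFlow a b S ρ g) (hq : 0 ≤ q)
    (hθ : SignChangesAt g S θ) (hη : η ∈ S) (hv : v ∈ S) :
    discountExponent ρ (fun w => q + g w) η v
      ≤ q * transitTime ρ a v + discountExponent ρ g θ v := by
  have hsplit := h.discountExponent_add_adjacent hθ.mem hη hv
  have hbefore := h.discountExponent_nonneg hθ hη
  have htime := mul_nonneg hq (h.transitTime_nonneg (h.subset_Ico hη))
  rw [h.discountExponent_const_add hη hv]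
  linarith

lemma le_discountExponent_const_add (h : DiscountedFlow a b S ρ g) (hθ : θ ∈ S)
    (hη : SignChangesAt (fun w => q + g w) S η) (hv : v ∈ S) :
    q * (transitTime ρ a v - transitTime ρ a θ) + discountExponent ρ g θ v
      ≤ discountExponent ρ (fun w => q + g w) η v := by
  have hsplit := (h.const_add q).discountExponent_add_adjacent hη.mem hθ hv
  have hbefore := (h.const_add q).discountExponent_nonneg hη hθ
  rw [← h.discountExponent_const_add hθ hv]
  linarith

lemma integrableOn_exp_neg_transitTime_div_speed (h : DiscountedFlow a b S ρ g) (hq : 0 < q) :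
    IntegrableOn (fun v => Real.exp (-(q * transitTime ρ a v)) / ρ v) (Ioo a b) := by
  refine integrableOn_Ioo_of_monotoneOn_of_hasDerivAt
    (f := fun v => -(Real.exp (-(q * transitTime ρ a v)) / q)) ?_ ?_ ?_ fun v hv => ?_
  · intro u hu v hv huv
    have := h.transitTime_monotoneOn hu hv huv
    dsimp only
    gcongr
  · refine ⟨-(1 / q), forall_mem_image.2 fun v hv => ?_⟩
    have := h.transitTime_nonneg (Ioo_subset_Ico_self hv)
    have hexp : Real.exp (-(q * transitTime ρ a v)) ≤ 1 := Real.exp_le_one_iff.2 (by nlinarith)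
    gcongr
  · exact ⟨0, forall_mem_image.2 fun v _ => neg_nonpos.2 (by positivity)⟩
  · have hderiv := (((h.hasDerivAt_transitTime hv).const_mul q).neg.exp.div_const q).neg
    exact hderiv.congr_deriv (by simp only [Pi.neg_apply]; field_simp)

lemma integrableOn_exp_neg_discountExponent_const_add (h : DiscountedFlow a b S ρ g) {M : ℝ}
    (hq : 0 < q) (hθ : SignChangesAt g S θ) (hη : SignChangesAt (fun w => q + g w) S η)
    (hk : ContinuousOn k (Ioo a b)) (hkM : ∀ v ∈ Ioo a b, |k v| ≤ M / ρ v) :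
    IntegrableOn (fun v => Real.exp (-discountExponent ρ (fun w => q + g w) η v) * k v)
      (Ioo a b) := by
  have hdominating := (h.integrableOn_exp_neg_transitTime_div_speed hq).const_mul
    (Real.exp (q * transitTime ρ a θ) * M)
  have hcont := (h.const_add q).discountExponent_continuousOn hη.mem
  refine hdominating.mono'
    (ContinuousOn.aestronglyMeasurable (by fun_prop) measurableSet_Ioo) ?_
  filter_upwards [ae_restrict_mem measurableSet_Ioo] with v hv
  have hexp : Real.exp (-discountExponent ρ (fun w => q + g w) η v)
      ≤ Real.exp (q * transitTime ρ a θ) * Real.exp (-(q * transitTime ρ a v)) := by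
    rw [← Real.exp_add]
    have hlower := h.le_discountExponent_const_add hθ.mem hη (h.Ioo_subset hv)
    have hnonneg := h.discountExponent_nonneg hθ (h.Ioo_subset hv)
    exact Real.exp_le_exp.2 (by linarith)
  rw [norm_mul, Real.norm_eq_abs, Real.norm_eq_abs, Real.abs_exp]
  calc _ ≤ _ := mul_le_mul hexp (hkM v hv) (abs_nonneg _) (by positivity)
    _ = _ := by ring

lemma tendsto_lintegral_exp_neg_discountExponent (h : DiscountedFlow a b S ρ g) {η : ℝ → ℝ}
    (hθ : SignChangesAt g S θ) (hη : ∀ q, 0 < q → SignChangesAt (fun w => q + g w) S (η q))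
    (hk : ContinuousOn k (Ioo a b)) (hk0 : ∀ v ∈ Ioo a b, 0 ≤ k v) :
    Tendsto (fun q => ∫⁻ v in Ioo a b,
        ENNReal.ofReal (Real.exp (-discountExponent ρ (fun w => q + g w) (η q) v) * k v))
      (𝓝[>] 0)
      (𝓝 (∫⁻ v in Ioo a b, ENNReal.ofReal (Real.exp (-discountExponent ρ g θ v) * k v))) := by
  have hlower := tendsto_lintegral_exp_neg_mul (m := volume.restrict (Ioo a b))
    (h.transitTime_continuousOn.aemeasurable measurableSet_Ioo)
    (ae_restrict_of_forall_mem measurableSet_Ioo fun v hv =>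
      h.transitTime_nonneg (Ioo_subset_Ico_self hv))
    (f := fun v => ENNReal.ofReal (Real.exp (-discountExponent ρ g θ v) * k v))
    (((h.discountExponent_continuousOn hθ.mem).neg.rexp.mul hk).aemeasurable
      measurableSet_Ioo).ennreal_ofReal
  have hupper := tendsto_ofReal_exp_mul_mul (transitTime ρ a θ)
    (∫⁻ v in Ioo a b, ENNReal.ofReal (Real.exp (-discountExponent ρ g θ v) * k v))
  refine tendsto_of_tendsto_of_tendsto_of_le_of_le' hlower hupper ?_ ?_ <;>
    filter_upwards [self_mem_nhdsWithin] with q hq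
  · refine setLIntegral_mono' measurableSet_Ioo fun v hv => ?_
    rw [← ENNReal.ofReal_mul (Real.exp_nonneg _), ← mul_assoc, ← Real.exp_add]
    have hle := h.discountExponent_const_add_le (le_of_lt hq) hθ (hη q hq).mem (h.Ioo_subset hv)
    have := hk0 v hv
    gcongr
    linarith
  · rw [← lintegral_const_mul' _ _ ENNReal.ofReal_ne_top]
    refine setLIntegral_mono' measurableSet_Ioo fun v hv => ?_
    rw [← ENNReal.ofReal_mul (Real.exp_nonneg _), ← mul_assoc, ← Real.exp_add]
    have hle := h.le_discountExponent_const_add hθ.mem (hη q hq) (h.Ioo_subset hv)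
    have htime := mul_nonneg (le_of_lt hq) (h.transitTime_nonneg (Ioo_subset_Ico_self hv))
    have := hk0 v hv
    gcongr
    linarith

lemma tendsto_ofReal_integral_exp_neg_discountExponent (h : DiscountedFlow a b S ρ g)
    {η : ℝ → ℝ} {M : ℝ} (hθ : SignChangesAt g S θ)
    (hη : ∀ q, 0 < q → SignChangesAt (fun w => q + g w) S (η q))
    (hk : ContinuousOn k (Ioo a b)) (hk0 : ∀ v ∈ Ioo a b, 0 ≤ k v)
    (hkM : ∀ v ∈ Ioo a b, k v ≤ M / ρ v) :
    Tendsto (fun q => ENNReal.ofReal (∫ v in Ioo a b,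
        Real.exp (-discountExponent ρ (fun w => q + g w) (η q) v) * k v))
      (𝓝[>] 0)
      (𝓝 (∫⁻ v in Ioo a b, ENNReal.ofReal (Real.exp (-discountExponent ρ g θ v) * k v))) := by
  refine (h.tendsto_lintegral_exp_neg_discountExponent hθ hη hk hk0).congr' ?_
  filter_upwards [self_mem_nhdsWithin] with q hq
  refine (ofReal_integral_eq_lintegral_ofReal
    (h.integrableOn_exp_neg_discountExponent_const_add (M := M) hq hθ (hη q hq) hk fun v hv => ?_)
    (ae_restrict_of_forall_mem measurableSet_Ioo fun v hv => ?_)).symm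
  · exact (abs_of_nonneg (hk0 v hv)).trans_le (hkM v hv)
  · exact mul_nonneg (Real.exp_nonneg _) (hk0 v hv)

lemma lintegral_exp_neg_discountExponent_pos (h : DiscountedFlow a b S ρ g) (hθ : θ ∈ S)
    (hk : ContinuousOn k (Ioo a b)) (hk0 : ∀ v ∈ Ioo a b, 0 < k v) :
    0 < ∫⁻ v in Ioo a b, ENNReal.ofReal (Real.exp (-discountExponent ρ g θ v) * k v) := by
  have hab : a < b := (h.subset_Ico hθ).1.trans_lt (h.subset_Ico hθ).2
  refine setLIntegral_ofReal_pos measurableSet_Ioo (by simp [hab]) ?_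
    fun v hv => mul_pos (Real.exp_pos _) (hk0 v hv)
  exact ((h.discountExponent_continuousOn hθ).neg.rexp.mul hk).aemeasurable measurableSet_Ioo

end DiscountedFlow

end Flow

section SignChange

variable {f g : ℝ → ℝ} {S S' : Set ℝ} {a b c q θ η : ℝ}

lemma SignChangesAt.mono (h : SignChangesAt f S c) (hS : S' ⊆ S) (hc : c ∈ S') :
    SignChangesAt f S' c :=
  ⟨hc, fun w hw => h.nonpos w (hS hw), fun w hw => h.nonneg w (hS hw)⟩

lemma SignChangesAt.le_of_const_add (hθ : SignChangesAt g S θ) (hS : S.OrdConnected)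
    (hη : SignChangesAt (fun w => q + g w) S η) (hq : 0 < q) : η ≤ θ := by
  by_contra! hlt
  obtain ⟨w, hθw, hwη⟩ := exists_between hlt
  have hw := hS.out hθ.mem hη.mem ⟨hθw.le, hwη.le⟩
  linarith [hθ.nonneg w hw hθw, hη.nonpos w hw hwη]

lemma signChangesAt_sub_of_convexOn (hf : ConvexOn ℝ (Ioc a b) f) (hη : η ∈ Ioo a b)
    (hfη : f b ≤ f η) : SignChangesAt (fun w => f η - f w) (Ioo a b) η := by
  have hb : b ∈ Ioc a b := right_mem_Ioc.2 (hη.1.trans hη.2)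
  refine ⟨hη, fun w hw hwη => sub_nonpos.2 ?_, fun w hw hηw => sub_nonneg.2 ?_⟩
  · exact hf.le_left_of_right_le'' (Ioo_subset_Ioc_self hw) hb hwη.le hη.2 hfη
  · simpa only [max_eq_left hfη] using
      hf.le_max_of_mem_Icc (Ioo_subset_Ioc_self hη) hb ⟨hηw.le, hw.2.le⟩

end SignChange

section GeneratingFunction

variable {p r : ℕ → ℝ} {rneg z : ℝ}

lemma summable_mul_pow (hp : ∀ k, 0 ≤ p k) (hps : Summable p) (hz : z ∈ Icc (0 : ℝ) 1) :
    Summable fun k => p k * z ^ k :=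
  hps.of_nonneg_of_le (fun k => mul_nonneg (hp k) (pow_nonneg hz.1 k))
    fun k => mul_le_of_le_one_right (hp k) (pow_le_one₀ hz.1 hz.2)

lemma ptilde_zero (p : ℕ → ℝ) : ptilde p 0 = p 0 := by
  rw [ptilde, tsum_eq_single 0 fun k hk => by simp [hk], pow_zero, mul_one]

lemma ptilde_le_tsum (hp : ∀ k, 0 ≤ p k) (hps : Summable p) (hz : z ∈ Icc (0 : ℝ) 1) :
    ptilde p z ≤ ∑' k, p k :=
  (summable_mul_pow hp hps hz).tsum_le_tsum
    (fun k => mul_le_of_le_one_right (hp k) (pow_le_one₀ hz.1 hz.2)) hps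

lemma ptilde_continuousOn (hp : ∀ k, 0 ≤ p k) (hps : Summable p) :
    ContinuousOn (ptilde p) (Icc 0 1) := by
  refine continuousOn_tsum (fun k => by fun_prop) hps fun k z hz => ?_
  rw [Real.norm_of_nonneg (mul_nonneg (hp k) (pow_nonneg hz.1 k))]
  exact mul_le_of_le_one_right (hp k) (pow_le_one₀ hz.1 hz.2)

lemma ptilde_convexOn (hp : ∀ k, 0 ≤ p k) (hps : Summable p) :
    ConvexOn ℝ (Icc 0 1) (ptilde p) :=
  convexOn_tsum (convex_Icc 0 1)
    (fun k => ((convexOn_pow k).subset Icc_subset_Ici_self (convex_Icc 0 1)).smul (hp k))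
    fun _ hz => summable_mul_pow hp hps hz

lemma rtilde_eq (rneg : ℝ) (r : ℕ → ℝ) : rtilde rneg r = fun z => rneg / z + ptilde r z := rfl

lemma rtilde_one (hrsum : HasSum r (1 - rneg)) : rtilde rneg r 1 = 1 := by
  simp [rtilde, hrsum.tsum_eq]

lemma rtilde_continuousOn (hr : ∀ k, 0 ≤ r k) (hrs : Summable r) :
    ContinuousOn (rtilde rneg r) (Ioc 0 1) :=
  (continuousOn_const.div continuousOn_id fun _ hw => hw.1.ne').add
    ((ptilde_continuousOn hr hrs).mono Ioc_subset_Icc_self)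

lemma rtilde_convexOn (hrneg : 0 ≤ rneg) (hr : ∀ k, 0 ≤ r k) (hrs : Summable r) :
    ConvexOn ℝ (Ioc 0 1) (rtilde rneg r) := by
  have hinv : ConvexOn ℝ (Ioc (0 : ℝ) 1) fun z => rneg / z :=
    (((convexOn_zpow (-1)).subset Ioc_subset_Ioi_self (convex_Ioc 0 1)).smul hrneg).congr
      fun z _ => by simp [div_eq_mul_inv]
  exact hinv.add ((ptilde_convexOn hr hrs).subset Ioc_subset_Icc_self (convex_Ioc 0 1))

end GeneratingFunction

section BranchingProcess

/-- The speed `λ(p̃(v) - v)`, which is the paper's `ρ(v)` for `v < φ*`. -/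
noncomputable def branchingSpeed (lam : ℝ) (p : ℕ → ℝ) (v : ℝ) : ℝ := lam * (ptilde p v - v)

/-- The rate `μ(1 - r̃(v))`, so that the paper's `γ_q` is `(q + immigrationRate) / branchingSpeed`
below `φ*`. -/
noncomputable def immigrationRate (mu rneg : ℝ) (r : ℕ → ℝ) (v : ℝ) : ℝ :=
  mu * (1 - rtilde rneg r v)

/-- `η` is the paper's delimiter `θ_q`. The case `q = 0` characterizes the paper's `θ` provided
that `θ < 1`. -/
def IsDelimiter (mu rneg : ℝ) (r : ℕ → ℝ) (q η : ℝ) : Prop :=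
  (0 < mu * rneg → η ∈ Ioo (0 : ℝ) 1 ∧ q = mu * (rtilde rneg r η - 1)) ∧ (mu * rneg = 0 → η = 0)

/-- The part of `[0, b)` on which `immigrationRate` has no pole: `0` is excluded under culling. -/
def rateDomain (mu rneg b : ℝ) : Set ℝ := {v ∈ Ico 0 b | mu * rneg = 0 ∨ 0 < v}

variable {lam mu rneg b q η θ φ : ℝ} {p r : ℕ → ℝ}

lemma Ioo_subset_rateDomain : Ioo 0 b ⊆ rateDomain mu rneg b :=
  fun _ hv => ⟨Ioo_subset_Ico_self hv, Or.inr hv.1⟩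

lemma rateDomain_subset_Ico : rateDomain mu rneg b ⊆ Ico 0 b := fun _ hv => hv.1

lemma rateDomain_mono (hb : b ≤ φ) : rateDomain mu rneg b ⊆ rateDomain mu rneg φ :=
  fun _ hv => ⟨Ico_subset_Ico_right hb hv.1, hv.2⟩

lemma SignChangesAt.rateDomain_restrict {f : ℝ → ℝ} (h : SignChangesAt f (rateDomain mu rneg b) η)
    (hφ : φ ≤ b) (hη : η < φ) : SignChangesAt f (rateDomain mu rneg φ) η :=
  h.mono (rateDomain_mono hφ) ⟨⟨h.mem.1.1, hη⟩, h.mem.2⟩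

lemma ordConnected_rateDomain : (rateDomain mu rneg b).OrdConnected :=
  ordConnected_of_Ioo_subset_of_subset_Ico Ioo_subset_rateDomain rateDomain_subset_Ico

lemma rateDomain_eq_Ioo (h : mu * rneg ≠ 0) : rateDomain mu rneg b = Ioo 0 b := by
  ext v
  simp only [rateDomain, h, mem_ofPred_eq, mem_Ico, mem_Ioo, false_or]
  exact ⟨fun hv => ⟨hv.2, hv.1.2⟩, fun hv => ⟨⟨hv.1.le, hv.2⟩, hv.1⟩⟩

lemma immigrationRate_eq_of_mul_eq_zero (h : mu * rneg = 0) :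
    immigrationRate mu rneg r = fun v => mu * (1 - ptilde r v) := by
  funext v
  rw [immigrationRate, rtilde_eq, mul_sub, mul_add, ← mul_div_assoc, h]
  ring

lemma immigrationRate_continuousOn (hr : ∀ k, 0 ≤ r k) (hrs : Summable r) :
    ContinuousOn (immigrationRate mu rneg r) (rateDomain mu rneg 1) := by
  by_cases h : mu * rneg = 0
  · rw [immigrationRate_eq_of_mul_eq_zero h]
    exact continuousOn_const.mul (continuousOn_const.sub ((ptilde_continuousOn hr hrs).mono
      (rateDomain_subset_Ico.trans Ico_subset_Icc_self)))
  · rw [rateDomain_eq_Ioo h]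
    exact continuousOn_const.mul (continuousOn_const.sub ((rtilde_continuousOn hr hrs).mono
      Ioo_subset_Ioc_self))

lemma discountedFlow_branchingSpeed_immigrationRate (hlam : 0 < lam) (hp : ∀ k, 0 ≤ p k)
    (hps : Summable p) (hp0 : 0 < p 0) (hφ1 : φ ≤ 1)
    (hφlo : ∀ z : ℝ, 0 < z → z < φ → z < ptilde p z) (hr : ∀ k, 0 ≤ r k) (hrs : Summable r) :
    DiscountedFlow 0 φ (rateDomain mu rneg φ) (branchingSpeed lam p)
      (immigrationRate mu rneg r) where
  Ioo_subset := Ioo_subset_rateDomain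
  subset_Ico := rateDomain_subset_Ico
  speed_continuousOn := continuousOn_const.mul (((ptilde_continuousOn hp hps).mono
    ((Ico_subset_Ico_right hφ1).trans Ico_subset_Icc_self)).sub continuousOn_id)
  speed_pos v hv := by
    refine mul_pos hlam (sub_pos.2 ?_)
    rcases hv.1.eq_or_lt with rfl | hv0
    · rwa [ptilde_zero]
    · exact hφlo v hv0 hv.2
  rate_continuousOn := (immigrationRate_continuousOn hr hrs).mono (rateDomain_mono hφ1)

lemma IsDelimiter.signChangesAt (hη : IsDelimiter mu rneg r q η) (hq : 0 ≤ q) (hmu : 0 ≤ mu)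
    (hrneg : 0 ≤ rneg) (hr : ∀ k, 0 ≤ r k) (hrsum : HasSum r (1 - rneg)) :
    SignChangesAt (fun w => q + immigrationRate mu rneg r w) (rateDomain mu rneg 1) η := by
  rcases (mul_nonneg hmu hrneg).eq_or_lt' with h | h
  · rw [hη.2 h, immigrationRate_eq_of_mul_eq_zero h]
    refine ⟨⟨left_mem_Ico.2 one_pos, Or.inl h⟩, fun w hw hw0 => absurd hw0 hw.1.1.not_gt,
      fun w hw _ => add_nonneg hq (mul_nonneg hmu ?_)⟩
    have hle := ptilde_le_tsum hr hrsum.summable (Ico_subset_Icc_self hw.1)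
    rw [hrsum.tsum_eq] at hle
    linarith
  · obtain ⟨hηmem, hηq⟩ := hη.1 h
    have hmu' : 0 < mu := pos_of_mul_pos_left h hrneg
    have hroot : rtilde rneg r 1 ≤ rtilde rneg r η := by
      rw [hηq] at hq
      rw [rtilde_one hrsum]
      exact sub_nonneg.1 (nonneg_of_mul_nonneg_right hq hmu')
    have hsign :=
      signChangesAt_sub_of_convexOn (rtilde_convexOn hrneg hr hrsum.summable) hηmem hroot
    have hrate (w : ℝ) : q + immigrationRate mu rneg r w
        = mu * (rtilde rneg r η - rtilde rneg r w) := by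
      rw [immigrationRate, hηq]
      ring
    simp only [hrate, rateDomain_eq_Ioo h.ne']
    exact ⟨hηmem, fun w hw hwη => mul_nonpos_of_nonneg_of_nonpos hmu (hsign.nonpos w hw hwη),
      fun w hw hηw => mul_nonneg hmu (hsign.nonneg w hw hηw)⟩

lemma IsDelimiter.signChangesAt_zero (hθ : IsDelimiter mu rneg r 0 θ) (hmu : 0 ≤ mu)
    (hrneg : 0 ≤ rneg) (hr : ∀ k, 0 ≤ r k) (hrsum : HasSum r (1 - rneg)) :
    SignChangesAt (immigrationRate mu rneg r) (rateDomain mu rneg 1) θ := by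
  simpa only [zero_add] using hθ.signChangesAt le_rfl hmu hrneg hr hrsum

lemma IsDelimiter.le_of_pos (hη : IsDelimiter mu rneg r q η) (hθ : IsDelimiter mu rneg r 0 θ)
    (hq : 0 < q) (hmu : 0 ≤ mu) (hrneg : 0 ≤ rneg) (hr : ∀ k, 0 ≤ r k)
    (hrsum : HasSum r (1 - rneg)) : η ≤ θ :=
  (hθ.signChangesAt_zero hmu hrneg hr hrsum).le_of_const_add ordConnected_rateDomain
    (hη.signChangesAt hq.le hmu hrneg hr hrsum) hq

lemma hasSum_of_isDelimiter_zero (hmu : 0 < mu) (hr : ∀ k, 0 ≤ r k)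
    (hrsum : rneg + ∑' k, r k = 1) (hθ : IsDelimiter mu rneg r 0 θ) :
    HasSum r (1 - rneg) := by
  suffices hrs : Summable r from hrs.hasSum_iff.2 (by linarith)
  -- If `r` is not summable then its `tsum` is `0`, so `rneg = 1` and `r̃(θ) ≥ 1/θ > 1`.
  by_contra hns
  rw [tsum_eq_zero_of_not_summable hns, add_zero] at hrsum
  subst hrsum
  obtain ⟨hθmem, hroot⟩ := hθ.1 (by simpa using hmu)
  have htail : 0 ≤ ∑' k, r k * θ ^ k :=
    tsum_nonneg fun k => mul_nonneg (hr k) (pow_nonneg hθmem.1.le k)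
  have hpole : 1 < 1 / θ := (one_lt_div hθmem.1).2 hθmem.2
  have hexceeds : 0 < mu * (rtilde 1 r θ - 1) := mul_pos hmu (by rw [rtilde]; linarith)
  exact hexceeds.ne hroot

lemma Phi_div_eq_integral {x : ℕ} (hq : q ≠ 0) (hη : η ∈ Ico 0 φ)
    (hspeed : ∀ v ∈ Ico 0 φ, 0 ≤ ptilde p v - v) :
    Phi lam mu p rneg r φ η q x / q
      = ∫ v in Ioo 0 φ, Real.exp (-discountExponent (branchingSpeed lam p)
          (fun w => q + immigrationRate mu rneg r w) η v) * (v ^ x / branchingSpeed lam p v) := by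
  rw [Phi, mul_div_cancel_left₀ _ hq, intervalIntegral.integral_of_le (hη.1.trans hη.2.le),
    integral_Ioc_eq_integral_Ioo]
  refine setIntegral_congr_fun measurableSet_Ioo fun v hv => ?_
  have hv' := Ioo_subset_Ico_self hv
  have hexponent : ∫ w in η..v, (q + mu * (1 - rtilde rneg r w)) / (lam * |ptilde p w - w|)
      = discountExponent (branchingSpeed lam p) (fun w => q + immigrationRate mu rneg r w) η v :=
    intervalIntegral.integral_congr fun w hw => by
      simp only [abs_of_nonneg (hspeed w (ordConnected_Ico.uIcc_subset hη hv' hw))]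
      rfl
  simp only [hexponent, abs_of_nonneg (hspeed v hv'), branchingSpeed]
  ring

end BranchingProcess

theorem stmt16_general {lam mu rneg φ θ : ℝ} {p r : ℕ → ℝ} {θf : ℝ → ℝ} (hlam : 0 < lam)
    (hp : ∀ k, 0 ≤ p k) (hps : Summable p) (hp0 : 0 < p 0) (hφ1 : φ ≤ 1)
    (hφlo : ∀ z : ℝ, 0 < z → z < φ → z < ptilde p z)
    (hmu : 0 ≤ mu) (hrneg : 0 ≤ rneg) (hr : ∀ k, 0 ≤ r k) (hrsum : HasSum r (1 - rneg))
    (hθf : ∀ q, 0 < q → IsDelimiter mu rneg r q (θf q)) (hθ : IsDelimiter mu rneg r 0 θ)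
    (hθφ : θ < φ) (x : ℕ) :
    0 < (∫⁻ v in Ioo 0 φ, ENNReal.ofReal (Real.exp (-∫ w in θ..v,
        mu * (1 - rtilde rneg r w) / (lam * (ptilde p w - w)))
      * v ^ x / (lam * (ptilde p v - v)))) ∧
    Tendsto (fun q => ENNReal.ofReal (Phi lam mu p rneg r φ (θf q) q x / q)) (𝓝[>] 0)
      (𝓝 (∫⁻ v in Ioo 0 φ, ENNReal.ofReal (Real.exp (-∫ w in θ..v,
          mu * (1 - rtilde rneg r w) / (lam * (ptilde p w - w)))
        * v ^ x / (lam * (ptilde p v - v))))) := by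
  have hflow := discountedFlow_branchingSpeed_immigrationRate (mu := mu) (rneg := rneg)
    hlam hp hps hp0 hφ1 hφlo hr hrsum.summable
  have hθS := (hθ.signChangesAt_zero hmu hrneg hr hrsum).rateDomain_restrict hφ1 hθφ
  have hθfS (q : ℝ) (hq : 0 < q) : SignChangesAt (fun w => q + immigrationRate mu rneg r w)
      (rateDomain mu rneg φ) (θf q) :=
    ((hθf q hq).signChangesAt hq.le hmu hrneg hr hrsum).rateDomain_restrict hφ1
      (((hθf q hq).le_of_pos hθ hq hmu hrneg hr hrsum).trans_lt hθφ)
  have hspeed (v : ℝ) (hv : v ∈ Ioo 0 φ) := hflow.speed_pos v (Ioo_subset_Ico_self hv)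
  have hweight : ContinuousOn (fun v => v ^ x / branchingSpeed lam p v) (Ioo 0 φ) :=
    (continuous_pow x).continuousOn.div (hflow.speed_continuousOn.mono Ioo_subset_Ico_self)
      fun v hv => (hspeed v hv).ne'
  have hweight_pos (v : ℝ) (hv : v ∈ Ioo 0 φ) : 0 < v ^ x / branchingSpeed lam p v :=
    div_pos (pow_pos hv.1 x) (hspeed v hv)
  have hintegrand (v : ℝ) : Real.exp (-∫ w in θ..v,
        mu * (1 - rtilde rneg r w) / (lam * (ptilde p w - w))) * v ^ x / (lam * (ptilde p v - v))
      = Real.exp (-discountExponent (branchingSpeed lam p) (immigrationRate mu rneg r) θ v)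
        * (v ^ x / branchingSpeed lam p v) := mul_div_assoc _ _ _
  simp only [hintegrand]
  constructor
  · exact hflow.lintegral_exp_neg_discountExponent_pos hθS.mem hweight hweight_pos
  · refine (hflow.tendsto_ofReal_integral_exp_neg_discountExponent (M := 1) hθS hθfS hweight
      (fun v hv => (hweight_pos v hv).le) fun v hv => ?_).congr' ?_
    · have := hspeed v hv
      gcongr
      exact pow_le_one₀ hv.1.le (hv.2.le.trans hφ1)
    · filter_upwards [self_mem_nhdsWithin] with q hq
      rw [Phi_div_eq_integral (ne_of_gt hq) (hθfS q hq).mem.1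
        fun v hv => (pos_of_mul_pos_right (hflow.speed_pos v hv) hlam.le).le]

/-- assume `μ > 0`, `φ* = 1` and `θ < 1`. For every `x ∈ ℕ`,
`lim_{q↓0} Φ_q(x)/q = ∫_0^1 exp{-∫_θ^v μ(1-r̃(w))/(λ(p̃(w)-w)) dw} v^x/(λ(p̃(v)-v)) dv`,
both sides taking values in `(0,∞]` (formalized in `ℝ≥0∞` via `ENNReal.ofReal`). -/
theorem stmt16 (lam mu rneg : ℝ) (p r : ℕ → ℝ) (φ θ : ℝ) (θf : ℝ → ℝ)
    (hlam : 0 < lam)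
    (hp : ∀ k, 0 ≤ p k) (hpsum : ∑' k, p k = 1) (hp0 : 0 < p 0) (hp1 : p 1 = 0)
    (hφ0 : 0 < φ) (hφfix : ptilde p φ = φ)
    (hφlo : ∀ z : ℝ, 0 < z → z < φ → z < ptilde p z)
    (hφeq : φ = 1)
    (hmu : 0 < mu) (hrneg : 0 ≤ rneg) (hr : ∀ k, 0 ≤ r k) (hr0 : r 0 = 0)
    (hrsum : rneg + ∑' k, r k = 1)
    (hθfpos : 0 < mu * rneg → ∀ q : ℝ, 0 < q →
      θf q ∈ Set.Ioo (0:ℝ) 1 ∧ q = mu * (rtilde rneg r (θf q) - 1))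
    (hθfzero : mu * rneg = 0 → ∀ q : ℝ, 0 < q → θf q = 0)
    (hθpos : 0 < mu * rneg → θ ∈ Set.Ioc (0:ℝ) 1 ∧ rtilde rneg r θ = 1 ∧
      ∀ z ∈ Set.Ioc (0:ℝ) 1, rtilde rneg r z = 1 → θ ≤ z)
    (hθzero : mu * rneg = 0 → θ = 0)
    (hθlt : θ < 1) :
    ∀ x : ℕ,
      0 < (∫⁻ v in Set.Ioo (0:ℝ) 1,
          ENNReal.ofReal (Real.exp (-∫ w in θ..v, mu * (1 - rtilde rneg r w)
              / (lam * (ptilde p w - w)))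
            * v ^ x / (lam * (ptilde p v - v)))) ∧
      Filter.Tendsto (fun q =>
          ENNReal.ofReal (Phi lam mu p rneg r φ (θf q) q x / q))
        (nhdsWithin 0 (Set.Ioi 0))
        (nhds (∫⁻ v in Set.Ioo (0:ℝ) 1,
          ENNReal.ofReal (Real.exp (-∫ w in θ..v, mu * (1 - rtilde rneg r w)
              / (lam * (ptilde p w - w)))
            * v ^ x / (lam * (ptilde p v - v))))) := by
  have hθ : IsDelimiter mu rneg r 0 θ :=
    ⟨fun h => ⟨⟨(hθpos h).1.1, hθlt⟩, by simp [(hθpos h).2.1]⟩, hθzero⟩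
  have hps : Summable p := by
    by_contra hns
    simp [tsum_eq_zero_of_not_summable hns] at hpsum
  subst hφeq
  exact stmt16_general hlam hp hps hp0 le_rfl hφlo hmu.le hrneg hr
    (hasSum_of_isDelimiter_zero hmu hr hrsum hθ)
    (fun q hq => ⟨fun h => hθfpos h q hq, fun h => hθfzero h q hq⟩) hθ hθlt
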